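/- For all positive integers n, the double sum over integers i, j of binom(2n, n+i) * binom(2n, n+j) * |i^2 (i^2 - j^2)| equals (n^3 (4n-3) / (2n-1)) * binom(2n, n)^2. -/

import Mathlib

/-- Binomial coefficient `n.choose k` extended to an integer lower index,
vanishing when `k < 0` (and, as usual, when `k > n`). -/
def ichoose (n : ℕ) (k : ℤ) : ℤ := if 0 ≤ k then (n.choose k.toNat : ℤ) else 0

/-- Summation by parts for finitely supported functions. -/
theorem sbp_aux {G : Type*} [AddCommGroup G] (e : G) (L s : G → ℚ)
    (hL : (Function.support L).Finite) :
    ∑ᶠ x, s x * (L x - L (x + e)) = ∑ᶠ x, L x * (s x - s (x - e)) := by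
  have h1 : (Function.support fun x => s x * L x).Finite :=
    hL.subset (fun x hx => by
      simp only [Function.mem_support, ne_eq, mul_eq_zero, not_or] at hx ⊢
      exact hx.2)
  have h3 : (Function.support fun x => s (x - e) * L x).Finite :=
    hL.subset (fun x hx => by
      simp only [Function.mem_support, ne_eq, mul_eq_zero, not_or] at hx ⊢
      exact hx.2)
  have h2 : (Function.support fun x => s x * L (x + e)).Finite := by
    refine (hL.preimage (f := fun x => x + e) (add_left_injective e).injOn).subset ?_
    intro x hx
    simp only [Function.mem_support, ne_eq, mul_eq_zero, not_or, Set.mem_preimage] at hx ⊢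
    exact hx.2
  have e1 : ∑ᶠ x, s x * (L x - L (x + e)) = ∑ᶠ x, s x * L x - ∑ᶠ x, s x * L (x + e) := by
    rw [← finsum_sub_distrib h1 h2]
    exact finsum_congr (fun x => by ring)
  have e2 : ∑ᶠ x, L x * (s x - s (x - e)) = ∑ᶠ x, s x * L x - ∑ᶠ x, s (x - e) * L x := by
    rw [← finsum_sub_distrib h1 h3]
    exact finsum_congr (fun x => by ring)
  have e3 : ∑ᶠ x, s x * L (x + e) = ∑ᶠ x, s (x - e) * L x := by
    rw [← finsum_comp_equiv (Equiv.addRight e) (f := fun x => s (x - e) * L x)]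
    exact finsum_congr (fun x => by simp)
  rw [e1, e2, e3]

theorem diag_aux (k : ℤ) (F : ℤ × ℤ → ℚ) (hF : (Function.support F).Finite) :
    ∑ᶠ p : ℤ × ℤ, F p * (if p.1 + p.2 = k then 1 else 0) = ∑ᶠ i : ℤ, F (i, k - i) := by
  rw [finsum_curry]
  · refine finsum_congr (fun i => ?_)
    rw [finsum_eq_single _ (k - i)]
    · simp
    · intro j hj
      have : ¬ (i + j = k) := by omega
      simp [this]
  · exact hF.subset (fun x hx => by
      simp only [Function.mem_support, ne_eq, mul_eq_zero, not_or] at hx ⊢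
      exact hx.1)

theorem ichoose_rec (n : ℕ) (i : ℤ) :
    ((n : ℚ) + i + 1) * (ichoose (2 * n) (n + (i + 1)) : ℚ)
      = (n - i) * (ichoose (2 * n) (n + i) : ℚ) := by
  unfold ichoose
  by_cases h : 0 ≤ (n : ℤ) + i
  · obtain ⟨k, hk⟩ := Int.eq_ofNat_of_zero_le h
    have hi : i = k - n := by omega
    subst hi
    have e1 : (n : ℤ) + (k - n + 1) = ((k + 1 : ℕ) : ℤ) := by push_cast; ring
    rw [e1, hk, if_pos (by positivity), if_pos (by positivity)]
    simp only [Int.toNat_natCast]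
    push_cast
    rcases le_or_gt k (2 * n) with hkn | hkn
    · have := Nat.choose_succ_right_eq (2 * n) k
      have h2 : (((2 * n).choose (k + 1) * (k + 1) : ℕ) : ℚ)
        = (((2 * n).choose k * (2 * n - k) : ℕ) : ℚ) := by rw [this]
      rw [Nat.cast_mul, Nat.cast_mul, Nat.cast_sub hkn] at h2
      push_cast at h2
      linear_combination h2
    · rw [Nat.choose_eq_zero_of_lt hkn, Nat.choose_eq_zero_of_lt (by omega)]
      simp
  · rw [if_neg h]
    split_ifs with h2
    · have : i = - n - 1 := by omega
      subst this
      push_cast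
      ring
    · simp

theorem ichoose_neg (n : ℕ) (i : ℤ) :
    ichoose (2 * n) (n + -i) = ichoose (2 * n) (n + i) := by
  unfold ichoose
  split_ifs with h1 h2 h2
  · congr 1
    rw [← Nat.choose_symm (by omega)]
    congr 1
    omega
  · rw [Nat.choose_eq_zero_of_lt (by omega)]; rfl
  · rw [Nat.choose_eq_zero_of_lt (by omega)]; rfl
  · rfl

theorem ichoose_supp (n : ℕ) (i : ℤ) (h : ichoose (2 * n) (n + i) ≠ 0) :
    i ∈ Set.Icc (-n : ℤ) n := by
  unfold ichoose at h
  split_ifs at h with h1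
  · constructor
    · omega
    · by_contra h2
      exact h (by rw [Nat.choose_eq_zero_of_lt (by omega)]; rfl)
  · exact absurd rfl h

theorem ichoose_zero (n : ℕ) : ichoose (2 * n) (n + 0) = ((2 * n).choose n : ℤ) := by
  simp [ichoose]

theorem main_aux (n : ℚ) (a : ℤ → ℚ) (ha : (Function.support a).Finite)
    (hneg : ∀ i, a (-i) = a i) (hrec : ∀ i : ℤ, (n + i + 1) * a (i + 1) = (n - i) * a i) :
    n * (2 * n - 1) * ∑ᶠ p : ℤ × ℤ, (a p.1 * a p.2 * |(p.1 : ℚ) ^ 2 * ((p.1 : ℚ) ^ 2 - (p.2 : ℚ) ^ 2)|)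
      = n ^ 4 * (4 * n - 3) * a 0 ^ 2 := by
  have hfin : ∀ h : ℤ × ℤ → ℚ, (Function.support fun p : ℤ × ℤ => a p.1 * a p.2 * h p).Finite := by
    intro h
    refine (ha.prod ha).subset ?_
    intro p hp
    simp only [Function.mem_support, ne_eq, mul_eq_zero, not_or, Set.mem_prod] at hp ⊢
    exact hp.1
  have hfin1 : ∀ h : ℤ → ℚ, (Function.support fun i : ℤ => a i * h i).Finite := by
    intro h
    refine ha.subset ?_
    intro p hp
    simp only [Function.mem_support, ne_eq, mul_eq_zero, not_or] at hp ⊢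
    exact hp.1
  have habs : ∀ x : ℤ, |(x : ℚ)| = (x.sign : ℚ) * x := by
    intro x
    have := Int.sign_mul_self_eq_abs x
    rw [← Int.cast_abs, ← this]; push_cast; rfl
  -- symmetrize
  set S := ∑ᶠ p : ℤ × ℤ, (a p.1 * a p.2 * |(p.1 : ℚ) ^ 2 * ((p.1 : ℚ) ^ 2 - (p.2 : ℚ) ^ 2)|) with hS
  have hS2 : S = ∑ᶠ p : ℤ × ℤ,
      (a p.1 * a p.2 * |(p.2 : ℚ) ^ 2 * ((p.1 : ℚ) ^ 2 - (p.2 : ℚ) ^ 2)|) := by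
    rw [hS, ← finsum_comp_equiv (Equiv.prodComm ℤ ℤ)]
    refine finsum_congr (fun p => ?_)
    simp only [Equiv.prodComm_apply, Prod.fst_swap, Prod.snd_swap]
    rw [abs_mul, abs_mul, abs_sub_comm]
    ring
  let s2 : ℤ × ℤ → ℚ := fun p => ((p.1 + p.2).sign : ℚ) * ((p.1 - p.2).sign : ℚ)
  let H : ℤ × ℤ → ℚ := fun p => a p.1 * a p.2 * (((p.1 : ℚ) - p.2) * ((n + p.1) * (n + p.2)) *
    (n * ((p.1 : ℚ) + p.2 - 1) ^ 2 + (n - 1) * ((p.1 : ℚ) - p.2) ^ 2 + 2 * n ^ 2 - n))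
  have hH : (Function.support H).Finite := hfin _
  have h1 : 4 * n * (2 * n - 1) * S = ∑ᶠ p : ℤ × ℤ, s2 p * (H p - H (p + (1, 1))) := by
    have : 4 * n * (2 * n - 1) * S = 2 * n * (2 * n - 1) * (S + S) := by ring
    rw [this]
    nth_rewrite 2 [hS2]
    rw [hS, ← finsum_add_distrib (hfin _) (hfin _), mul_finsum]
    · refine finsum_congr (fun p => ?_)
      obtain ⟨i, j⟩ := p
      simp only [s2, H, Prod.mk_add_mk]
      have hab : |(i : ℚ) ^ 2 - (j : ℚ) ^ 2| = ((i + j).sign : ℚ) * ((i - j).sign : ℚ) *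
          ((i : ℚ) ^ 2 - (j : ℚ) ^ 2) := by
        have e : (i : ℚ) ^ 2 - (j : ℚ) ^ 2 = (((i + j) * (i - j) : ℤ) : ℚ) := by push_cast; ring
        rw [e, habs, Int.sign_mul]
        push_cast
        ring
      rw [abs_mul, abs_mul, hab, abs_of_nonneg (sq_nonneg (i : ℚ)), abs_of_nonneg (sq_nonneg (j : ℚ))]
      have r := congrArg₂ (· * ·) (hrec i) (hrec j)
      push_cast
      linear_combination ((i + j).sign : ℚ) * ((i - j).sign : ℚ) * ((i : ℚ) - j) *
        (n * ((i : ℚ) + j + 1) ^ 2 + (n - 1) * ((i : ℚ) - j) ^ 2 + 2 * n ^ 2 - n) * r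
  let D : ℤ → ℤ × ℤ → ℚ := fun k p => if p.1 + p.2 = k then 1 else 0
  let sH : ℤ × ℤ → ℚ := fun p => a p.1 * a p.2 * (((p.1 : ℚ) - p.2) * ((n + p.1) * (n + p.2)) *
    (n * ((p.1 : ℚ) + p.2 - 1) ^ 2 + (n - 1) * ((p.1 : ℚ) - p.2) ^ 2 + 2 * n ^ 2 - n)
      * ((p.1 - p.2).sign : ℚ))
  have hsH : (Function.support sH).Finite := hfin _
  have hsHD : ∀ k, (Function.support fun p => sH p * D k p).Finite := fun k =>
    hsH.subset (fun x hx => by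
      simp only [Function.mem_support, ne_eq, mul_eq_zero, not_or] at hx ⊢
      exact hx.1)
  have h2 : ∑ᶠ p : ℤ × ℤ, s2 p * (H p - H (p + (1, 1)))
      = ∑ᶠ i : ℤ, sH (i, 0 - i) + 2 * ∑ᶠ i : ℤ, sH (i, 1 - i) + ∑ᶠ i : ℤ, sH (i, 2 - i) := by
    rw [sbp_aux _ _ _ hH, ← diag_aux 0 sH hsH, ← diag_aux 1 sH hsH, ← diag_aux 2 sH hsH, two_mul]
    change _ = ∑ᶠ p, sH p * D 0 p + (∑ᶠ p, sH p * D 1 p + ∑ᶠ p, sH p * D 1 p) + ∑ᶠ p, sH p * D 2 p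
    have hf11 : (Function.support fun p => sH p * D 1 p + sH p * D 1 p).Finite :=
      ((hsHD 1).union (hsHD 1)).subset (Function.support_add _ _)
    have hf011 : (Function.support fun p => sH p * D 0 p + (sH p * D 1 p + sH p * D 1 p)).Finite :=
      ((hsHD 0).union hf11).subset (Function.support_add _ _)
    rw [← finsum_add_distrib (hsHD 1) (hsHD 1), ← finsum_add_distrib (hsHD 0) hf11,
      ← finsum_add_distrib hf011 (hsHD 2)]
    refine finsum_congr (fun p => ?_)
    obtain ⟨i, j⟩ := p
    have hs : (((i + j).sign : ℚ) - ((i + j - 2).sign : ℚ)) = D 0 (i, j) + 2 * D 1 (i, j) + D 2 (i, j) := by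
      simp only [D]
      generalize i + j = u
      rcases lt_or_ge u 0 with h | h
      · rw [Int.sign_eq_neg_one_of_neg h, Int.sign_eq_neg_one_of_neg (by omega),
          if_neg (by omega), if_neg (by omega), if_neg (by omega)]; simp
      rcases lt_or_ge 2 u with hb | hb
      · rw [Int.sign_eq_one_of_pos (by omega), Int.sign_eq_one_of_pos (by omega),
          if_neg (by omega), if_neg (by omega), if_neg (by omega)]; simp
      interval_cases u <;> norm_num
    simp only [s2, Prod.mk_sub_mk]
    have e1 : i - 1 + (j - 1) = i + j - 2 := by ring
    have e2 : i - 1 - (j - 1) = i - j := by ring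
    rw [e1, e2]
    have : sH (i, j) = H (i, j) * ((i - j).sign : ℚ) := by simp only [sH, H]; ring
    rw [this]
    linear_combination H (i, j) * ((i - j).sign : ℚ) * hs
  -- the boundary sums
  let L : ℤ → ℚ := fun i => a i * (a i * (n + i) ^ 2 *
    (n ^ 3 - n ^ 2 + ((i : ℚ) ^ 2 - i) * (n ^ 2 - 2 * n) - ((i : ℚ) ^ 2 - i) ^ 2))
  have hL : (Function.support L).Finite := hfin1 _
  let M : ℤ → ℚ := fun i => a i * (a (i - 1) * ((n + i) * (n + i - 1)) *
    (2 * n ^ 3 - n ^ 2 + (2 * n ^ 2 - 2 * n + 1) * ((i : ℚ) - 1) ^ 2 - 2 * ((i : ℚ) - 1) ^ 4))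
  have hM : (Function.support M).Finite := hfin1 _
  have hr0 := hrec 0
  norm_num at hr0
  have h3 : ∑ᶠ i : ℤ, sH (i, 0 - i) = 2 * ∑ᶠ i : ℤ, ((i.sign : ℤ) : ℚ) * (L i - L (i + 1)) := by
    rw [two_mul, ← finsum_add_distrib]
    · refine finsum_congr (fun i => ?_)
      simp only [sH, L]
      have e : (i - (0 - i)).sign = i.sign := by
        rw [show i - (0 - i) = 2 * i by ring, Int.sign_mul, Int.sign_eq_one_of_pos (by norm_num : (0:ℤ) < 2), one_mul]
      rw [e, zero_sub, hneg]
      have r := congrArg (· ^ 2) (hrec i)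
      push_cast
      linear_combination 2 * (i.sign : ℚ) * 
        (n ^ 3 - n ^ 2 + ((i : ℚ) ^ 2 + i) * (n ^ 2 - 2 * n) - ((i : ℚ) ^ 2 + i) ^ 2) * r
    all_goals
      refine (hL.union (hL.preimage (f := fun x => x + 1) (add_left_injective 1).injOn)).subset ?_
      intro x hx
      simp only [Function.mem_support, ne_eq, Set.mem_union, Set.mem_preimage] at hx ⊢
      by_contra hc
      push Not at hc
      apply hx
      rw [hc.1, hc.2]; simp
  have h4 : ∑ᶠ i : ℤ, sH (i, 2 - i) = ∑ᶠ i : ℤ, sH (i, 0 - i) := by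
    rw [← finsum_comp_equiv (Equiv.addRight (1 : ℤ))]
    refine finsum_congr (fun i => ?_)
    simp only [sH, Equiv.coe_addRight]
    have e : i + 1 - (2 - (i + 1)) = i - (0 - i) := by ring
    have e2 : 2 - (i + 1) = -i + 1 := by ring
    rw [e, e2, zero_sub]
    have r := congrArg₂ (· * ·) (hrec i) (hrec (-i))
    push_cast at r ⊢
    linear_combination 2 * (i : ℚ) * (n + (n - 1) * (2 * i) ^ 2 + 2 * n ^ 2 - n) *
       ((i - -i).sign : ℚ) * r
  have h5 : ∑ᶠ i : ℤ, sH (i, 1 - i) = ∑ᶠ i : ℤ, ((2 * i - 1).sign : ℚ) * (M i - M (i + 1)) := by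
    refine finsum_congr (fun i => ?_)
    simp only [sH, M]
    have e : i - (1 - i) = 2 * i - 1 := by ring
    have e2 : 1 - i = - (i - 1) := by ring
    have e3 : i + 1 - 1 = i := by ring
    rw [e, e2, hneg, e3]
    have r := hrec i
    have rb := hrec (i - 1)
    rw [sub_add_cancel] at rb
    push_cast at r rb ⊢
    linear_combination ((2 * i - 1).sign : ℚ) *
      (2 * n ^ 3 - n ^ 2 + (2 * n ^ 2 - 2 * n + 1) * (i : ℚ) ^ 2 - 2 * (i : ℚ) ^ 4) * a i *
      ((n + i) * r + (n - i) * rb)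
  have h6 : ∑ᶠ i : ℤ, ((i.sign : ℤ) : ℚ) * (L i - L (i + 1)) = 2 * n ^ 2 * (n ^ 3 - n ^ 2) * a 0 ^ 2 := by
    rw [sbp_aux 1 L (fun i => ((i.sign : ℤ) : ℚ)) hL,
      finsum_eq_sum_of_support_subset (s := {0, 1})]
    · rw [Finset.sum_pair (by norm_num)]
      simp [L]
      linear_combination (n ^ 3 - n ^ 2) * ((n + 1) * a 1 + n * a 0) * hr0
    · intro i hi
      simp only [Function.mem_support, ne_eq, mul_eq_zero, not_or] at hi
      by_contra hc
      simp at hc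
      apply hi.2
      rcases lt_or_ge i 0 with h | h
      · rw [Int.sign_eq_neg_one_of_neg h, Int.sign_eq_neg_one_of_neg (by omega)]; simp
      · rw [Int.sign_eq_one_of_pos (by omega), Int.sign_eq_one_of_pos (by omega)]; simp
  have h7 : ∑ᶠ i : ℤ, ((2 * i - 1).sign : ℚ) * (M i - M (i + 1))
      = 2 * n ^ 2 * (2 * n ^ 3 - n ^ 2) * a 0 ^ 2 := by
    rw [sbp_aux 1 M (fun i => ((2 * i - 1).sign : ℚ)) hM, finsum_eq_single _ 1]
    · simp [M]
      linear_combination 2 * n * (2 * n ^ 3 - n ^ 2) * a 0 * hr0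
    · intro i hi
      rcases lt_or_ge i 1 with h | h
      · rw [Int.sign_eq_neg_one_of_neg (by omega), Int.sign_eq_neg_one_of_neg (by omega)]; simp
      · rw [Int.sign_eq_one_of_pos (by omega), Int.sign_eq_one_of_pos (by omega)]; simp
  rw [h4, h5, h3, h6, h7] at h2
  rw [h2] at h1
  linear_combination h1 / 4

theorem stmt16 (n : ℕ) (hn : 1 ≤ n) :
    ∑ᶠ i : ℤ, ∑ᶠ j : ℤ,
        ((ichoose (2 * n) (n + i) : ℚ) * (ichoose (2 * n) (n + j) : ℚ)
          * |(i : ℚ) ^ 2 * ((i : ℚ) ^ 2 - (j : ℚ) ^ 2)|)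
      = (n : ℚ) ^ 3 * (4 * n - 3) / (2 * n - 1) * ((2 * n).choose n : ℚ) ^ 2 := by
  have ha : (Function.support fun i : ℤ => (ichoose (2 * n) (n + i) : ℚ)).Finite := by
    refine (Set.finite_Icc (-n : ℤ) n).subset ?_
    intro i hi
    exact ichoose_supp n i (by simpa using hi)
  have key := main_aux (n : ℚ) (fun i => (ichoose (2 * n) (n + i) : ℚ)) ha
    (fun i => by simp only [ichoose_neg]) (fun i => ichoose_rec n i)
  simp only [ichoose_zero] at key
  rw [finsum_curry] at key
  · have hnq : (1 : ℚ) ≤ n := by exact_mod_cast hn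
    have h1 : (n : ℚ) ≠ 0 := by positivity
    have h2 : (2 * n - 1 : ℚ) ≠ 0 := by linarith
    rw [div_mul_eq_mul_div, eq_div_iff h2]
    apply mul_left_cancel₀ h1
    push_cast at key
    linear_combination key
  · refine (ha.prod ha).subset ?_
    intro p hp
    simp only [Function.mem_support, ne_eq, mul_eq_zero, not_or, Set.mem_prod] at hp ⊢
    exact hp.1
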